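/- Let K > 0, J_X, J_Y ∈ ℝ, and let ξ = (ξ^R, ξ^θ, ξ^X, ξ^Y) : (s₀,s₁) → ℝ⁴ be a C¹ curve with ξ^R(s) ≥ R₀ and ξ̇^R(s) > 0 for all s, satisfying for all s: (i) e^{2ρ(ξ^R,ξ^θ)} ( −(ξ̇^R)² + (ξ̇^θ)² ) + e^{2U(ξ^R,ξ^θ)} ( ξ̇^X + A(ξ^R,ξ^θ) ξ̇^Y )² + e^{−2U(ξ^R,ξ^θ)} (ξ^R)² (ξ̇^Y)² = −K²; (ii) e^{2U(ξ^R,ξ^θ)} ( ξ̇^X + A(ξ^R,ξ^θ) ξ̇^Y ) = J_X; (iii) A(ξ^R,ξ^θ) e^{2U(ξ^R,ξ^θ)} ( ξ̇^X + A(ξ^R,ξ^θ) ξ̇^Y ) + e^{−2U(ξ^R,ξ^θ)} (ξ^R)² ξ̇^Y = J_Y. Then for all s ∈ (s₀,s₁): 0 ≤ (∂_R μ)(ξ^R(s),ξ^θ(s)) ≤ [ 2 ξ̇^R(s) e^{2ρ(ξ^R(s),ξ^θ(s))} / ( K² + J_X² e^{−2U(ξ^R(s),ξ^θ(s))} + (J_Y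 − A(ξ^R(s),ξ^θ(s)) J_X)² e^{2U(ξ^R(s),ξ^θ(s))} (ξ^R(s))^{−2} ) ] · (d/ds)( μ(ξ^R(s),ξ^θ(s)) ), and in particular (∂_R μ)(ξ^R(s),ξ^θ(s)) ≤ 2 K^{−2} e^{2ρ(ξ^R(s),ξ^θ(s))} ξ̇^R(s) (d/ds)( μ(ξ^R(s),ξ^θ(s)) ). -/

import Mathlib

open Real MeasureTheory Set

/-- Partial derivative with respect to the first (time) variable `R`. -/
noncomputable def pdR (f : ℝ → ℝ → ℝ) (R θ : ℝ) : ℝ := deriv (fun r => f r θ) R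

/-- Partial derivative with respect to the second (space) variable `θ`. -/
noncomputable def pdT (f : ℝ → ℝ → ℝ) (R θ : ℝ) : ℝ := deriv (fun t => f R t) θ

/-!
In the null directions `∂_R ± ∂_θ` the constraint equations complete two squares:
`μ_R ± μ_θ = R (U_R ± U_θ - 1 / (2R))² + e^{4U} / (4R) (A_R ± A_θ)² ≥ 0`, so `|μ_θ| ≤ μ_R`.
Eliminating `ξ̇^X` and `ξ̇^Y` in favour of the momenta turns the normalisation of `ξ̇` into
`e^{2ρ} ((ξ̇^R)² - (ξ̇^θ)²) = m²`, where `m² = K² + J_X² e^{-2U} + (J_Y - A J_X)² e^{2U} / R²`.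
The chain rule gives `μ̇ = μ_R ξ̇^R + μ_θ ξ̇^θ`, and
`2 ξ̇^R μ̇ - μ_R ((ξ̇^R)² - (ξ̇^θ)²)` is half of
`(μ_R + μ_θ) (ξ̇^R + ξ̇^θ)² + (μ_R - μ_θ) (ξ̇^R - ξ̇^θ)² ≥ 0`. Multiplying by `e^{2ρ}` concludes.
-/

section PartialDerivatives

variable {f : ℝ → ℝ → ℝ} {R θ : ℝ}

lemma hasDerivAt_comp_pdR_pdT {x y : ℝ → ℝ} {s x' y' : ℝ}
    (hf : DifferentiableAt ℝ (Function.uncurry f) (x s, y s))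
    (hx : HasDerivAt x x' s) (hy : HasDerivAt y y' s) :
    HasDerivAt (fun u => f (x u) (y u))
      (pdR f (x s) (y s) * x' + pdT f (x s) (y s) * y') s := by
  have hpdR : pdR f (x s) (y s) = fderiv ℝ (Function.uncurry f) (x s, y s) (1, 0) :=
    (HasFDerivAt.comp_hasDerivAt (f := fun r => (r, y s)) (x s) hf.hasFDerivAt
      ((hasDerivAt_id _).prodMk (hasDerivAt_const _ _))).deriv
  have hpdT : pdT f (x s) (y s) = fderiv ℝ (Function.uncurry f) (x s, y s) (0, 1) :=
    (HasFDerivAt.comp_hasDerivAt (f := fun t => (x s, t)) (y s) hf.hasFDerivAt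
      ((hasDerivAt_const _ _).prodMk (hasDerivAt_id _))).deriv
  have hsplit : ((x', y') : ℝ × ℝ) = x' • (1, 0) + y' • (0, 1) := by simp
  have hcomp := HasFDerivAt.comp_hasDerivAt (f := fun u => (x u, y u)) s hf.hasFDerivAt
    (hx.prodMk hy)
  rw [hsplit, map_add, map_smul, map_smul, ← hpdR, ← hpdT, smul_eq_mul, smul_eq_mul,
    mul_comm x', mul_comm y'] at hcomp
  exact hcomp

lemma hasDerivAt_pdR (hf : DifferentiableAt ℝ (Function.uncurry f) (R, θ)) :
    HasDerivAt (fun r => f r θ) (pdR f R θ) R := by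
  simpa using hasDerivAt_comp_pdR_pdT hf (hasDerivAt_id R) (hasDerivAt_const R θ)

lemma hasDerivAt_pdT (hf : DifferentiableAt ℝ (Function.uncurry f) (R, θ)) :
    HasDerivAt (fun t => f R t) (pdT f R θ) θ := by
  simpa using hasDerivAt_comp_pdR_pdT hf (hasDerivAt_const θ R) (hasDerivAt_id θ)

end PartialDerivatives

lemma mul_sq_sub_sq_le_two_mul {𝕜 : Type*} [CommRing 𝕜] [LinearOrder 𝕜] [IsStrictOrderedRing 𝕜]
    {M N : 𝕜} (h : |N| ≤ M) (p q : 𝕜) :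
    M * (p ^ 2 - q ^ 2) ≤ 2 * p * (M * p + N * q) := by
  obtain ⟨hadd, hsub⟩ := abs_le.mp h
  have hout : 0 ≤ (M + N) * (p + q) ^ 2 := mul_nonneg (by linarith) (sq_nonneg _)
  have hin : 0 ≤ (M - N) * (p - q) ^ 2 := mul_nonneg (by linarith) (sq_nonneg _)
  linarith

/-- The function `μ = η - U + (1/4) ln R`, meaningful for `R > 0`. -/
noncomputable def gowdyMu (U η : ℝ → ℝ → ℝ) (R θ : ℝ) : ℝ :=
  η R θ - U R θ + 4⁻¹ * log R

/-- The Gowdy constraint equations for `η` at the single point `(R, θ)`. Differentiability is part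
of the notion because `pdR` and `pdT` take the value `0` where the derivative does not exist. -/
structure GowdyConstraintAt (U A η : ℝ → ℝ → ℝ) (R θ : ℝ) : Prop where
  differentiableAt_U : DifferentiableAt ℝ (Function.uncurry U) (R, θ)
  differentiableAt_A : DifferentiableAt ℝ (Function.uncurry A) (R, θ)
  differentiableAt_η : DifferentiableAt ℝ (Function.uncurry η) (R, θ)
  pdR_η : pdR η R θ = R * (pdR U R θ ^ 2 + pdT U R θ ^ 2
    + exp (4 * U R θ) / (4 * R ^ 2) * (pdR A R θ ^ 2 + pdT A R θ ^ 2))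
  pdT_η : pdT η R θ = R * (2 * pdR U R θ * pdT U R θ
    + exp (4 * U R θ) / (2 * R ^ 2) * (pdR A R θ * pdT A R θ))

section Mu

variable {U A η : ℝ → ℝ → ℝ} {R θ : ℝ}

lemma differentiableAt_uncurry_gowdyMu
    (hU : DifferentiableAt ℝ (Function.uncurry U) (R, θ))
    (hη : DifferentiableAt ℝ (Function.uncurry η) (R, θ)) (hR : R ≠ 0) :
    DifferentiableAt ℝ (Function.uncurry (gowdyMu U η)) (R, θ) :=
  (hη.sub hU).add ((differentiableAt_fst.log hR).const_mul _)

lemma pdR_gowdyMu (hU : DifferentiableAt ℝ (Function.uncurry U) (R, θ))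
    (hη : DifferentiableAt ℝ (Function.uncurry η) (R, θ)) (hR : R ≠ 0) :
    pdR (gowdyMu U η) R θ = pdR η R θ - pdR U R θ + 4⁻¹ * R⁻¹ :=
  (((hasDerivAt_pdR hη).sub (hasDerivAt_pdR hU)).add ((hasDerivAt_log hR).const_mul _)).deriv

lemma pdT_gowdyMu (hU : DifferentiableAt ℝ (Function.uncurry U) (R, θ))
    (hη : DifferentiableAt ℝ (Function.uncurry η) (R, θ)) :
    pdT (gowdyMu U η) R θ = pdT η R θ - pdT U R θ :=
  (((hasDerivAt_pdT hη).sub (hasDerivAt_pdT hU)).add_const _).deriv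

namespace GowdyConstraintAt

lemma pdR_add_pdT_gowdyMu (h : GowdyConstraintAt U A η R θ) (hR : R ≠ 0) :
    pdR (gowdyMu U η) R θ + pdT (gowdyMu U η) R θ =
      R * (pdR U R θ + pdT U R θ - 1 / (2 * R)) ^ 2
        + exp (4 * U R θ) / (4 * R) * (pdR A R θ + pdT A R θ) ^ 2 := by
  rw [pdR_gowdyMu h.differentiableAt_U h.differentiableAt_η hR,
    pdT_gowdyMu h.differentiableAt_U h.differentiableAt_η, h.pdR_η, h.pdT_η]
  field_simp
  ring

lemma pdR_sub_pdT_gowdyMu (h : GowdyConstraintAt U A η R θ) (hR : R ≠ 0) :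
    pdR (gowdyMu U η) R θ - pdT (gowdyMu U η) R θ =
      R * (pdR U R θ - pdT U R θ - 1 / (2 * R)) ^ 2
        + exp (4 * U R θ) / (4 * R) * (pdR A R θ - pdT A R θ) ^ 2 := by
  rw [pdR_gowdyMu h.differentiableAt_U h.differentiableAt_η hR,
    pdT_gowdyMu h.differentiableAt_U h.differentiableAt_η, h.pdR_η, h.pdT_η]
  field_simp
  ring

lemma abs_pdT_gowdyMu_le (h : GowdyConstraintAt U A η R θ) (hR : 0 < R) :
    |pdT (gowdyMu U η) R θ| ≤ pdR (gowdyMu U η) R θ := by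
  have hadd : 0 ≤ pdR (gowdyMu U η) R θ + pdT (gowdyMu U η) R θ := by
    rw [h.pdR_add_pdT_gowdyMu hR.ne']
    positivity
  have hsub : 0 ≤ pdR (gowdyMu U η) R θ - pdT (gowdyMu U η) R θ := by
    rw [h.pdR_sub_pdT_gowdyMu hR.ne']
    positivity
  exact abs_le.mpr ⟨by linarith, by linarith⟩

end GowdyConstraintAt

end Mu

/-- The squared effective mass, for the motion in the `(R, θ)` plane, of a particle of mass `K` with
angular momenta `J_X` and `J_Y`, at a point with `R ≠ 0` where `U` and `A` take the values `u` and
`a`. -/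
noncomputable def effMassSq (K JX JY u a R : ℝ) : ℝ :=
  K ^ 2 + JX ^ 2 * exp (-(2 * u)) + (JY - a * JX) ^ 2 * exp (2 * u) / R ^ 2

lemma sq_le_effMassSq (K JX JY u a R : ℝ) : K ^ 2 ≤ effMassSq K JX JY u a R := by
  have hX : 0 ≤ JX ^ 2 * exp (-(2 * u)) := by positivity
  have hY : 0 ≤ (JY - a * JX) ^ 2 * exp (2 * u) / R ^ 2 := by positivity
  unfold effMassSq
  linarith

/-- At the parameter `s`, the curve `ξ` has normalisation `g(ξ̇, ξ̇) = -K²` and angular momenta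
`g(ξ̇, X) = J_X`, `g(ξ̇, Y) = J_Y` for the Gowdy metric `g` given by `U`, `A`, `η`.
Differentiability is part of the notion because `deriv` takes the value `0` where the derivative
does not exist. -/
structure HasMomentaAt (U A η : ℝ → ℝ → ℝ) (K JX JY : ℝ) (ξR ξθ ξX ξY : ℝ → ℝ) (s : ℝ) :
    Prop where
  differentiableAt_R : DifferentiableAt ℝ ξR s
  differentiableAt_θ : DifferentiableAt ℝ ξθ s
  differentiableAt_X : DifferentiableAt ℝ ξX s
  differentiableAt_Y : DifferentiableAt ℝ ξY s
  norm_eq :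
    exp (2 * (η (ξR s) (ξθ s) - U (ξR s) (ξθ s))) * (-(deriv ξR s) ^ 2 + (deriv ξθ s) ^ 2)
      + exp (2 * U (ξR s) (ξθ s)) * (deriv ξX s + A (ξR s) (ξθ s) * deriv ξY s) ^ 2
      + exp (-(2 * U (ξR s) (ξθ s))) * (ξR s) ^ 2 * (deriv ξY s) ^ 2 = -K ^ 2
  momentum_X : exp (2 * U (ξR s) (ξθ s)) * (deriv ξX s + A (ξR s) (ξθ s) * deriv ξY s) = JX
  momentum_Y :
    A (ξR s) (ξθ s) * exp (2 * U (ξR s) (ξθ s)) * (deriv ξX s + A (ξR s) (ξθ s) * deriv ξY s)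
      + exp (-(2 * U (ξR s) (ξθ s))) * (ξR s) ^ 2 * deriv ξY s = JY

section Curve

variable {U A η : ℝ → ℝ → ℝ} {K JX JY : ℝ} {ξR ξθ ξX ξY : ℝ → ℝ} {s : ℝ}

lemma HasMomentaAt.exp_mul_sq_sub_sq (h : HasMomentaAt U A η K JX JY ξR ξθ ξX ξY s)
    (hR : ξR s ≠ 0) :
    exp (2 * (η (ξR s) (ξθ s) - U (ξR s) (ξθ s))) * ((deriv ξR s) ^ 2 - (deriv ξθ s) ^ 2) =
      effMassSq K JX JY (U (ξR s) (ξθ s)) (A (ξR s) (ξθ s)) (ξR s) := by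
  obtain ⟨-, -, -, -, hnorm, hX, hY⟩ := h
  set u := U (ξR s) (ξθ s)
  set a := A (ξR s) (ξθ s)
  have hX_sq : JX ^ 2 * exp (-(2 * u)) = exp (2 * u) * (deriv ξX s + a * deriv ξY s) ^ 2 := by
    rw [← hX, exp_neg]
    field_simp
  have hY_sub : JY - a * JX = exp (-(2 * u)) * ξR s ^ 2 * deriv ξY s := by
    rw [← hY, ← hX]
    ring
  have hY_sq : (JY - a * JX) ^ 2 * exp (2 * u) / ξR s ^ 2 =
      exp (-(2 * u)) * ξR s ^ 2 * deriv ξY s ^ 2 := by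
    rw [hY_sub, exp_neg]
    field_simp
  rw [effMassSq, hX_sq, hY_sq]
  linarith

lemma HasMomentaAt.pdR_gowdyMu_mul_effMassSq_le (hR : 0 < ξR s)
    (hcon : GowdyConstraintAt U A η (ξR s) (ξθ s))
    (hξ : HasMomentaAt U A η K JX JY ξR ξθ ξX ξY s) :
    pdR (gowdyMu U η) (ξR s) (ξθ s)
        * effMassSq K JX JY (U (ξR s) (ξθ s)) (A (ξR s) (ξθ s)) (ξR s) ≤
      2 * deriv ξR s * exp (2 * (η (ξR s) (ξθ s) - U (ξR s) (ξθ s)))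
        * deriv (fun u => gowdyMu U η (ξR u) (ξθ u)) s := by
  have hderiv := (hasDerivAt_comp_pdR_pdT
    (differentiableAt_uncurry_gowdyMu hcon.differentiableAt_U hcon.differentiableAt_η hR.ne')
    hξ.differentiableAt_R.hasDerivAt hξ.differentiableAt_θ.hasDerivAt).deriv
  have hcone := mul_sq_sub_sq_le_two_mul (hcon.abs_pdT_gowdyMu_le hR) (deriv ξR s) (deriv ξθ s)
  rw [← hderiv] at hcone
  rw [← hξ.exp_mul_sq_sub_sq hR.ne']
  linarith [mul_le_mul_of_nonneg_left hcone
    (exp_nonneg (2 * (η (ξR s) (ξθ s) - U (ξR s) (ξθ s))))]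

theorem stmt18_general (hK : K ≠ 0) (hR : 0 < ξR s)
    (hcon : GowdyConstraintAt U A η (ξR s) (ξθ s))
    (hξ : HasMomentaAt U A η K JX JY ξR ξθ ξX ξY s) :
    0 ≤ pdR (gowdyMu U η) (ξR s) (ξθ s)
      ∧ pdR (gowdyMu U η) (ξR s) (ξθ s)
          ≤ 2 * deriv ξR s * exp (2 * (η (ξR s) (ξθ s) - U (ξR s) (ξθ s)))
              / effMassSq K JX JY (U (ξR s) (ξθ s)) (A (ξR s) (ξθ s)) (ξR s)
            * deriv (fun u => gowdyMu U η (ξR u) (ξθ u)) s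
      ∧ pdR (gowdyMu U η) (ξR s) (ξθ s)
          ≤ 2 * K⁻¹ ^ 2 * exp (2 * (η (ξR s) (ξθ s) - U (ξR s) (ξθ s))) * deriv ξR s
            * deriv (fun u => gowdyMu U η (ξR u) (ξθ u)) s := by
  have hK_sq : 0 < K ^ 2 := by positivity
  have hK_le := sq_le_effMassSq K JX JY (U (ξR s) (ξθ s)) (A (ξR s) (ξθ s)) (ξR s)
  have hnonneg : 0 ≤ pdR (gowdyMu U η) (ξR s) (ξθ s) :=
    (abs_nonneg _).trans (hcon.abs_pdT_gowdyMu_le hR)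
  have hmass := hξ.pdR_gowdyMu_mul_effMassSq_le hR hcon
  refine ⟨hnonneg, ?_, ?_⟩
  · rwa [div_mul_eq_mul_div, le_div_iff₀ (hK_sq.trans_le hK_le)]
  · have hle := (le_div_iff₀ hK_sq).mpr ((mul_le_mul_of_nonneg_left hK_le hnonneg).trans hmass)
    exact hle.trans_eq (by ring)

end Curve

theorem stmt18
    (R₀ : ℝ) (hR₀ : 0 < R₀)
    (U A : ℝ → ℝ → ℝ)
    (hU : ContDiff ℝ (⊤ : ℕ∞) (Function.uncurry U))
    (hA : ContDiff ℝ (⊤ : ℕ∞) (Function.uncurry A))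
    (hUper : ∀ R θ, U R (θ + 2 * π) = U R θ)
    (hAper : ∀ R θ, A R (θ + 2 * π) = A R θ)
    (η : ℝ → ℝ → ℝ)
    (hη : ContDiff ℝ (⊤ : ℕ∞) (Function.uncurry η))
    (hηper : ∀ R θ, η R (θ + 2 * π) = η R θ)
    (conηR : ∀ R, R₀ ≤ R → ∀ θ : ℝ,
      pdR η R θ = R * ((pdR U R θ) ^ 2 + (pdT U R θ) ^ 2
        + exp (4 * U R θ) / (4 * R ^ 2) * ((pdR A R θ) ^ 2 + (pdT A R θ) ^ 2)))
    (conηT : ∀ R, R₀ ≤ R → ∀ θ : ℝ,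
      pdT η R θ = R * (2 * pdR U R θ * pdT U R θ
        + exp (4 * U R θ) / (2 * R ^ 2) * (pdR A R θ * pdT A R θ)))
    (K JX JY : ℝ) (hK : 0 < K)
    (s₀ s₁ : ℝ) (hs : s₀ < s₁)
    (ξR ξθ ξX ξY : ℝ → ℝ)
    (hξR : ContDiffOn ℝ 1 ξR (Set.Ioo s₀ s₁))
    (hξθ : ContDiffOn ℝ 1 ξθ (Set.Ioo s₀ s₁))
    (hξX : ContDiffOn ℝ 1 ξX (Set.Ioo s₀ s₁))
    (hξY : ContDiffOn ℝ 1 ξY (Set.Ioo s₀ s₁))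
    (hdom : ∀ s ∈ Set.Ioo s₀ s₁, R₀ ≤ ξR s)
    (hfut : ∀ s ∈ Set.Ioo s₀ s₁, 0 < deriv ξR s)
    (hnorm : ∀ s ∈ Set.Ioo s₀ s₁,
      exp (2 * (η (ξR s) (ξθ s) - U (ξR s) (ξθ s)))
          * (-(deriv ξR s) ^ 2 + (deriv ξθ s) ^ 2)
        + exp (2 * U (ξR s) (ξθ s))
          * (deriv ξX s + A (ξR s) (ξθ s) * deriv ξY s) ^ 2
        + exp (-(2 * U (ξR s) (ξθ s))) * (ξR s) ^ 2 * (deriv ξY s) ^ 2 = -K ^ 2)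
    (hJX : ∀ s ∈ Set.Ioo s₀ s₁,
      exp (2 * U (ξR s) (ξθ s))
        * (deriv ξX s + A (ξR s) (ξθ s) * deriv ξY s) = JX)
    (hJY : ∀ s ∈ Set.Ioo s₀ s₁,
      A (ξR s) (ξθ s) * exp (2 * U (ξR s) (ξθ s))
          * (deriv ξX s + A (ξR s) (ξθ s) * deriv ξY s)
        + exp (-(2 * U (ξR s) (ξθ s))) * (ξR s) ^ 2 * deriv ξY s = JY) :
    ∀ s ∈ Set.Ioo s₀ s₁,
      0 ≤ pdR (fun r t => η r t - U r t + 4⁻¹ * Real.log r) (ξR s) (ξθ s)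
      ∧ pdR (fun r t => η r t - U r t + 4⁻¹ * Real.log r) (ξR s) (ξθ s)
          ≤ 2 * deriv ξR s * exp (2 * (η (ξR s) (ξθ s) - U (ξR s) (ξθ s)))
              / (K ^ 2 + JX ^ 2 * exp (-(2 * U (ξR s) (ξθ s)))
                + (JY - A (ξR s) (ξθ s) * JX) ^ 2
                    * exp (2 * U (ξR s) (ξθ s)) / (ξR s) ^ 2)
            * deriv (fun u => η (ξR u) (ξθ u) - U (ξR u) (ξθ u)
                + 4⁻¹ * Real.log (ξR u)) s
      ∧ pdR (fun r t => η r t - U r t + 4⁻¹ * Real.log r) (ξR s) (ξθ s)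
          ≤ 2 * K⁻¹ ^ 2 * exp (2 * (η (ξR s) (ξθ s) - U (ξR s) (ξθ s)))
            * deriv ξR s
            * deriv (fun u => η (ξR u) (ξθ u) - U (ξR u) (ξθ u)
                + 4⁻¹ * Real.log (ξR u)) s := by
  intro s hs
  have hdiff {x : ℝ → ℝ} (hx : ContDiffOn ℝ 1 x (Ioo s₀ s₁)) : DifferentiableAt ℝ x s :=
    (hx.contDiffAt (isOpen_Ioo.mem_nhds hs)).differentiableAt one_ne_zero
  have hcon : GowdyConstraintAt U A η (ξR s) (ξθ s) :=
    ⟨hU.differentiable (by simp) _, hA.differentiable (by simp) _, hη.differentiable (by simp) _,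
      conηR _ (hdom s hs) _, conηT _ (hdom s hs) _⟩
  have hξ : HasMomentaAt U A η K JX JY ξR ξθ ξX ξY s :=
    ⟨hdiff hξR, hdiff hξθ, hdiff hξX, hdiff hξY, hnorm s hs, hJX s hs, hJY s hs⟩
  exact stmt18_general hK.ne' (hR₀.trans_le (hdom s hs)) hcon hξ
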